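/- Let l ≥ 1 and let M be an l-locally optimal d-distance matching of G. Then |M*| ≤ ρ_l·|M| for every d-distance matching M* of G (in particular for a maximum-cardinality one), where ρ_l is defined by ρ₁=3, ρ₂=2, and ρ_l = (4ρ_{l−2}−3)/(2ρ_{l−2}−1) for l ≥ 3. -/

import Mathlib

open Finset

/-- `M` is a `d`-distance matching of the bipartite graph with left node set `Fin n`
(ordered) and right node set `T`, whose edge set is `E`. -/
def DDM {n : ℕ} {T : Type*} [DecidableEq T] (d : ℕ) (E M : Finset (Fin n × T)) : Prop :=
  M ⊆ E ∧ (∀ e ∈ M, ∀ f ∈ M, e.1 = f.1 → e = f) ∧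
    (∀ e ∈ M, ∀ f ∈ M, e.2 = f.2 → e ≠ f → d ≤ Nat.dist e.1.val f.1.val)

/-- The hit set `H(e, M)`: the inclusion-wise minimal subset of the `d`-distance
matching `M` whose removal makes `M ∪ {e}` a feasible `d`-distance matching. -/
def hitSet {n : ℕ} {T : Type*} [DecidableEq T] (d : ℕ) (M : Finset (Fin n × T))
    (e : Fin n × T) : Finset (Fin n × T) :=
  (M.filter
    (fun f => f.1 = e.1 ∨ (f.2 = e.2 ∧ f.1 ≠ e.1 ∧ Nat.dist f.1.val e.1.val < d))).erase e

/-- `M` is `l`-locally optimal: there is no `d`-distance matching `X ⊆ E ∖ M` with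
`l ≥ |X| > |H(X, M)|`. -/
def LocOpt {n : ℕ} {T : Type*} [DecidableEq T] (d l : ℕ)
    (E M : Finset (Fin n × T)) : Prop :=
  ¬ ∃ X, DDM d E X ∧ X ⊆ E \ M ∧ X.card ≤ l ∧ (X.biUnion (hitSet d M)).card < X.card

/-- The sequence `ρ₁ = 3`, `ρ₂ = 2`, `ρ_l = (4ρ_{l−2} − 3)/(2ρ_{l−2} − 1)` for `l ≥ 3`. -/
noncomputable def rho : ℕ → ℝ
  | 0 => 3
  | 1 => 3
  | 2 => 2
  | l + 3 => (4 * rho (l + 1) - 3) / (2 * rho (l + 1) - 1)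

/-!
Let `N e` be the hit set of `e ∈ M* \ M`. Every element of `M` lies in at most three of these sets
(a conflict comes from the same node of `S`, from the left or from the right), and local optimality
is Hall's condition for at most `l` of them, so the bound is the theorem of Hurkens and Schrijver
on set systems of degree at most `k = 3`.

That theorem is proved by induction on `l` in steps of two. Delete the singletons among the sets,
together with the points they cover. A minimal violation of Hall's condition by sets `J` in what
remains covers fewer than `#J` points, each of them at least twice, so the sets of `J` lose at most
`∑ #(N i) - 2 * #J + 2` points in the deletion. Adding the singletons at those points to `J` yields
a violation in the original system, by at most `∑ (#(N i) - 1) + 2` sets. Hence Hall's condition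
survives with the budget decreased by two, provided a set of size `s` now costs `s - 1` instead
of `1`. The induction therefore runs over set systems with costs, and a set of cost `c` is counted
with weight `1 - (c - 1) * (ρ - 1)`.
-/

section SetSystem

variable {ι α : Type*} [DecidableEq α] {N : ι → Finset α} {I J : Finset ι}

lemma sum_card_eq_sum_card_filter_mem (N : ι → Finset α) (I : Finset ι) :
    ∑ i ∈ I, #(N i) = ∑ v ∈ I.biUnion N, #{i ∈ I | v ∈ N i} := by
  refine Eq.trans ?_ (sum_card_bipartiteAbove_eq_sum_card_bipartiteBelow fun i v ↦ v ∈ N i)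
  refine sum_congr rfl fun i hi ↦ congrArg card ?_
  rw [bipartiteAbove, filter_mem_eq_inter, inter_eq_right.2 (subset_biUnion_of_mem N hi)]

lemma sum_card_le_mul_card_biUnion {k : ℕ} (hdeg : ∀ v, #{i ∈ I | v ∈ N i} ≤ k) :
    ∑ i ∈ I, #(N i) ≤ k * #(I.biUnion N) := by
  rw [sum_card_eq_sum_card_filter_mem, mul_comm]
  exact sum_le_card_nsmul _ _ k fun v _ ↦ hdeg v

lemma biUnion_sdiff_right (N : ι → Finset α) (J : Finset ι) (A : Finset α) :
    (J.biUnion fun i ↦ N i \ A) = J.biUnion N \ A := by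
  ext v
  simp only [mem_biUnion, mem_sdiff]
  tauto

lemma biUnion_filter_subset_of_card_eq_one (hN : ∀ i ∈ I, #(N i) = 1) (A : Finset α) :
    {i ∈ I | N i ⊆ A}.biUnion N = A ∩ I.biUnion N := by
  ext v
  simp only [mem_biUnion, mem_filter, mem_inter]
  constructor
  · rintro ⟨i, ⟨hi, hiA⟩, hv⟩
    exact ⟨hiA hv, i, hi, hv⟩
  · rintro ⟨hvA, i, hi, hv⟩
    obtain ⟨a, ha⟩ := card_eq_one.1 (hN i hi)
    obtain rfl : v = a := by simpa [ha] using hv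
    exact ⟨i, ⟨hi, by simpa [ha] using hvA⟩, hv⟩

lemma card_erase_le_of_minimal_violator [DecidableEq ι]
    (hJ : Minimal (fun J ↦ #(J.biUnion N) < #J) J) {i : ι} (hi : i ∈ J) :
    #(J.erase i) ≤ #((J.erase i).biUnion N) :=
  not_lt.1 (hJ.not_prop_of_lt (erase_ssubset hi))

lemma card_le_card_biUnion_add_one_of_minimal_violator
    (hJ : Minimal (fun J ↦ #(J.biUnion N) < #J) J) : #J ≤ #(J.biUnion N) + 1 := by
  classical
  obtain ⟨i, hi⟩ : J.Nonempty := card_pos.1 (Nat.zero_lt_of_lt hJ.prop)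
  calc #J = #(J.erase i) + 1 := (card_erase_add_one hi).symm
    _ ≤ #((J.erase i).biUnion N) + 1 := by
      gcongr
      exact card_erase_le_of_minimal_violator hJ hi
    _ ≤ #(J.biUnion N) + 1 := by
      gcongr
      exact erase_subset i J

lemma two_le_card_filter_mem_of_minimal_violator
    (hJ : Minimal (fun J ↦ #(J.biUnion N) < #J) J) {v : α} (hv : v ∈ J.biUnion N) :
    2 ≤ #{i ∈ J | v ∈ N i} := by
  classical
  by_contra! hlt
  obtain ⟨i, hi, hvi⟩ := mem_biUnion.1 hv
  have hunique : ∀ j ∈ J, v ∈ N j → j = i := fun j hj hvj ↦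
    card_le_one.1 (Nat.le_of_lt_succ hlt) j (mem_filter.2 ⟨hj, hvj⟩) i (mem_filter.2 ⟨hi, hvi⟩)
  have hsub : (J.erase i).biUnion N ⊆ (J.biUnion N).erase v := by
    intro u hu
    obtain ⟨j, hj, huj⟩ := mem_biUnion.1 hu
    obtain ⟨hji, hjJ⟩ := mem_erase.1 hj
    refine mem_erase.2 ⟨?_, mem_biUnion.2 ⟨j, hjJ, huj⟩⟩
    rintro rfl
    exact hji (hunique j hjJ huj)
  have hle := (card_erase_le_of_minimal_violator hJ hi).trans (card_le_card hsub)
  have hJcard := card_erase_add_one hi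
  have hUcard := card_erase_add_one hv
  have hviol : #(J.biUnion N) < #J := hJ.prop
  lia

lemma two_mul_card_le_sum_card_add_two_of_minimal_violator
    (hJ : Minimal (fun J ↦ #(J.biUnion N) < #J) J) : 2 * #J ≤ ∑ i ∈ J, #(N i) + 2 := by
  have hdouble : #(J.biUnion N) * 2 ≤ ∑ i ∈ J, #(N i) := by
    rw [sum_card_eq_sum_card_filter_mem]
    exact card_nsmul_le_sum _ _ 2 fun v ↦ two_le_card_filter_mem_of_minimal_violator hJ
  have := card_le_card_biUnion_add_one_of_minimal_violator hJ
  lia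

lemma card_biUnion_inter_add_two_mul_card_le_of_minimal_violator {A : Finset α}
    (hJ : Minimal (fun J ↦ #(J.biUnion fun i ↦ N i \ A) < #J) J) :
    #(J.biUnion N ∩ A) + 2 * #J ≤ ∑ i ∈ J, #(N i) + 2 := by
  have hinter : #(J.biUnion N ∩ A) ≤ ∑ i ∈ J, #(N i ∩ A) := by
    rw [biUnion_inter]
    exact card_biUnion_le
  have hsplit : ∑ i ∈ J, #(N i ∩ A) + ∑ i ∈ J, #(N i \ A) = ∑ i ∈ J, #(N i) := by
    simp_rw [← sum_add_distrib, card_inter_add_card_sdiff]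
  have := two_mul_card_le_sum_card_add_two_of_minimal_violator hJ
  lia

end SetSystem

/-- Hall's condition for the subfamilies of `(N i)_{i ∈ I}` of total cost at most `b`, where the
set `N i` costs `c i`. With unit costs, this is Hall's condition for at most `b` sets. -/
def HallWithin {ι α : Type*} [DecidableEq α] (N : ι → Finset α) (c : ι → ℕ) (I : Finset ι)
    (b : ℕ) : Prop :=
  ∀ J ⊆ I, ∑ i ∈ J, c i ≤ b → #J ≤ #(J.biUnion N)

/-- The indices of the singletons of cost one, which each step of the induction deletes. -/
def unitSingletons {ι α : Type*} (N : ι → Finset α) (c : ι → ℕ) (I : Finset ι) : Finset ι :=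
  {i ∈ I | c i = 1 ∧ #(N i) = 1}

lemma unitSingletons_subset {ι α : Type*} (N : ι → Finset α) (c : ι → ℕ) (I : Finset ι) :
    unitSingletons N c I ⊆ I :=
  filter_subset _ I

/-- What remains of the set `N i` once the points of the singletons of cost one are deleted. -/
def residualSet {ι α : Type*} [DecidableEq α] (N : ι → Finset α) (c : ι → ℕ) (I : Finset ι)
    (i : ι) : Finset α :=
  N i \ (unitSingletons N c I).biUnion N

/-- The cost of `residualSet N c I i`. The subtraction does not truncate for positive costs, as
Hall's condition for a positive budget makes the sets of cost one nonempty. -/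
def residualCost {ι α : Type*} (N : ι → Finset α) (c : ι → ℕ) (i : ι) : ℕ :=
  c i + #(N i) - 2

lemma sum_residualCost_add_two_mul_card {ι α : Type*} {N : ι → Finset α} {c : ι → ℕ}
    {J : Finset ι} (hJ : ∀ i ∈ J, 2 ≤ c i + #(N i)) :
    ∑ i ∈ J, residualCost N c i + 2 * #J = ∑ i ∈ J, c i + ∑ i ∈ J, #(N i) := by
  rw [mul_comm, ← smul_eq_mul, ← sum_const, ← sum_add_distrib, ← sum_add_distrib]
  exact sum_congr rfl fun i hi ↦ Nat.sub_add_cancel (hJ i hi)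

namespace HallWithin

variable {ι α : Type*} [DecidableEq α] {N : ι → Finset α} {c : ι → ℕ} {I : Finset ι} {b : ℕ}

lemma card_pos_of_cost_le (h : HallWithin N c I b) {i : ι} (hi : i ∈ I) (hci : c i ≤ b) :
    0 < #(N i) := by
  simpa using h {i} (singleton_subset_iff.2 hi) (by simpa using hci)

lemma two_le_cost_add_card (h : HallWithin N c I b) (hb : 1 ≤ b) {i : ι} (hi : i ∈ I)
    (hci : 1 ≤ c i) : 2 ≤ c i + #(N i) := by
  have hpos : c i ≤ b → 0 < #(N i) := h.card_pos_of_cost_le hi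
  lia

lemma three_le_cost_add_card [DecidableEq ι] (h : HallWithin N c I b) (hb : 2 ≤ b) {i : ι}
    (hi : i ∈ I \ unitSingletons N c I) (hci : 1 ≤ c i) : 3 ≤ c i + #(N i) := by
  obtain ⟨hiI, hiS⟩ := mem_sdiff.1 hi
  have hpos : c i ≤ b → 0 < #(N i) := h.card_pos_of_cost_le hiI
  have hne : ¬(c i = 1 ∧ #(N i) = 1) := fun hi' ↦ hiS (mem_filter.2 ⟨hiI, hi'⟩)
  lia

lemma pairwiseDisjoint_unitSingletons (h : HallWithin N c I b) (hb : 2 ≤ b) :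
    (unitSingletons N c I : Set ι).PairwiseDisjoint N := by
  classical
  intro i hi j hj hij
  obtain ⟨hiI, hci, hNi⟩ := mem_filter.1 hi
  obtain ⟨hjI, hcj, hNj⟩ := mem_filter.1 hj
  have hpair : #{i, j} ≤ #(({i, j} : Finset ι).biUnion N) :=
    h {i, j} (by simp [insert_subset_iff, hiI, hjI]) (by rw [sum_pair hij]; lia)
  rw [card_pair hij, biUnion_insert, singleton_biUnion] at hpair
  have := card_union_add_card_inter (N i) (N j)
  exact disjoint_iff_inter_eq_empty.2 (card_eq_zero.1 (by lia))

lemma card_biUnion_unitSingletons (h : HallWithin N c I b) (hb : 2 ≤ b) {S : Finset ι}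
    (hS : S ⊆ unitSingletons N c I) : #(S.biUnion N) = #S := by
  rw [card_biUnion fun i hi j hj ↦ h.pairwiseDisjoint_unitSingletons hb (hS hi) (hS hj),
    card_eq_sum_ones]
  exact sum_congr rfl fun i hi ↦ (mem_filter.1 (hS hi)).2.2

theorem residualSystem [DecidableEq ι] (h : HallWithin N c I (b + 2)) (hc : ∀ i ∈ I, 1 ≤ c i) :
    HallWithin (residualSet N c I) (residualCost N c) (I \ unitSingletons N c I) b := by
  intro J₀ hJ₀ hcost₀
  by_contra! hviol₀
  obtain ⟨J, hJJ₀, hJ⟩ := exists_minimal_le_of_wellFoundedLT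
    (fun J ↦ #(J.biUnion (residualSet N c I)) < #J) J₀ hviol₀
  have hJI : J ⊆ I \ unitSingletons N c I := hJJ₀.trans hJ₀
  set S := unitSingletons N c I
  set A := J.biUnion N
  let S' := {i ∈ S | N i ⊆ A}
  have hS'S : S' ⊆ S := filter_subset _ _
  have hdisj : Disjoint J S' := (disjoint_sdiff_self_left.mono_left hJI).mono_right hS'S
  have hS'A : S'.biUnion N = A ∩ S.biUnion N :=
    biUnion_filter_subset_of_card_eq_one (fun i hi ↦ (mem_filter.1 hi).2.2) A
  have hS'card : #S' = #(A ∩ S.biUnion N) := by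
    rw [← hS'A, h.card_biUnion_unitSingletons (by lia) hS'S]
  have hcost : ∑ i ∈ J ∪ S', c i ≤ b + 2 := by
    have hS'cost : ∑ i ∈ S', c i = #S' := by
      rw [card_eq_sum_ones]
      exact sum_congr rfl fun i hi ↦ (mem_filter.1 (hS'S hi)).2.1
    have hJcost := sum_residualCost_add_two_mul_card (N := N) (c := c) (J := J) fun i hi ↦
      have hiI := (mem_sdiff.1 (hJI hi)).1
      h.two_le_cost_add_card (by lia) hiI (hc i hiI)
    have hlost : #(A ∩ S.biUnion N) + 2 * #J ≤ ∑ i ∈ J, #(N i) + 2 :=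
      card_biUnion_inter_add_two_mul_card_le_of_minimal_violator hJ
    have hJb : ∑ i ∈ J, residualCost N c i ≤ b := (sum_le_sum_of_subset hJJ₀).trans hcost₀
    rw [sum_union hdisj]
    lia
  have hhall : #(J ∪ S') ≤ #((J ∪ S').biUnion N) :=
    h _ (union_subset (hJI.trans sdiff_subset) (hS'S.trans (unitSingletons_subset N c I)))
      hcost
  have hviol : #(A \ S.biUnion N) < #J := by
    rw [← biUnion_sdiff_right]
    exact hJ.prop
  rw [card_union_of_disjoint hdisj, union_biUnion, hS'A, union_eq_left.2 inter_subset_left] at hhall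
  have := card_sdiff_add_card_inter A (S.biUnion N)
  lia

end HallWithin

/-- The Hurkens–Schrijver ratio for set systems in which every point has degree at most `k` and
Hall's condition holds for at most `t + 1` sets; the index is shifted to start at `0`. -/
noncomputable def hurkensSchrijverRatio (k : ℕ) : ℕ → ℝ
  | 0 => k
  | 1 => (k + 1) / 2
  | t + 2 => ((k + 1) * hurkensSchrijverRatio k t - k) / (2 * hurkensSchrijverRatio k t - 1)

/-- The weight with which a set of cost `c` is counted against the ratio `r`. The slope makes the
combination `(r - 1) * s + costWeight r (c + s - 2)` independent of the size `s` of the set. -/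
def costWeight (r c : ℝ) : ℝ :=
  1 - (c - 1) * (r - 1)

lemma one_le_hurkensSchrijverRatio {k : ℕ} (hk : 2 ≤ k) : ∀ t, 1 ≤ hurkensSchrijverRatio k t
  | 0 => by
    rw [hurkensSchrijverRatio]
    exact_mod_cast one_le_two.trans hk
  | 1 => by
    have hk' : (2 : ℝ) ≤ k := by exact_mod_cast hk
    rw [hurkensSchrijverRatio]
    linarith
  | t + 2 => by
    have hk' : (2 : ℝ) ≤ k := by exact_mod_cast hk
    have ih := one_le_hurkensSchrijverRatio hk t
    rw [hurkensSchrijverRatio, le_div_iff₀ (by linarith)]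
    nlinarith

lemma rho_succ_eq_hurkensSchrijverRatio : ∀ t, rho (t + 1) = hurkensSchrijverRatio 3 t
  | 0 => by norm_num [rho, hurkensSchrijverRatio]
  | 1 => by norm_num [rho, hurkensSchrijverRatio]
  | t + 2 => by
    rw [rho, hurkensSchrijverRatio, rho_succ_eq_hurkensSchrijverRatio t]
    norm_num

lemma one_le_rho_succ (t : ℕ) : 1 ≤ rho (t + 1) := by
  rw [rho_succ_eq_hurkensSchrijverRatio]
  exact one_le_hurkensSchrijverRatio (by simp) t

lemma costWeight_le_of_two_le {r c s : ℝ} (hr : 2 ≤ r) (hc : 1 ≤ c) (hcs : 2 ≤ c + s) :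
    costWeight r c ≤ s := by
  unfold costWeight
  nlinarith

lemma two_mul_costWeight_le_of_three_halves_le {r c s : ℝ} (hr : 3 / 2 ≤ r) (hc : 1 ≤ c)
    (hcs : 3 ≤ c + s) : 2 * costWeight r c ≤ s := by
  unfold costWeight
  nlinarith

lemma mul_costWeight_ratio_le {k r c s : ℝ} (hk : 2 ≤ k) (hr : 1 ≤ r) (hc : 1 ≤ c) :
    (2 * r - 1) * costWeight (((k + 1) * r - k) / (2 * r - 1)) c ≤
      (r - 1) * s + costWeight r (c + s - 2) := by
  have hpos : 0 < 2 * r - 1 := by linarith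
  have hexpand : (2 * r - 1) * costWeight (((k + 1) * r - k) / (2 * r - 1)) c =
      2 * r - 1 - (k - 1) * ((c - 1) * (r - 1)) := by
    unfold costWeight
    field_simp
    ring
  have hslope : 0 ≤ (c - 1) * (r - 1) := mul_nonneg (by linarith) (by linarith)
  rw [hexpand, costWeight]
  nlinarith

section HurkensSchrijver

lemma card_unitSingletons_add_sum_sdiff_card {ι α : Type*} [DecidableEq ι] (N : ι → Finset α)
    (c : ι → ℕ) (I : Finset ι) :
    #(unitSingletons N c I) + ∑ i ∈ I \ unitSingletons N c I, #(N i) = ∑ i ∈ I, #(N i) := by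
  have hS : ∑ i ∈ unitSingletons N c I, #(N i) = #(unitSingletons N c I) := by
    rw [card_eq_sum_ones]
    exact sum_congr rfl fun i hi ↦ (mem_filter.1 hi).2.2
  rw [← sum_sdiff (unitSingletons_subset N c I), add_comm, hS]

lemma card_unitSingletons_add_sum_sdiff_costWeight {ι α : Type*} [DecidableEq ι]
    (N : ι → Finset α) (c : ι → ℕ) (I : Finset ι) (r : ℝ) :
    #(unitSingletons N c I) + ∑ i ∈ I \ unitSingletons N c I, costWeight r (c i) =
      ∑ i ∈ I, costWeight r (c i) := by
  have hS : ∑ i ∈ unitSingletons N c I, costWeight r (c i) = #(unitSingletons N c I) := by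
    rw [card_eq_sum_ones, Nat.cast_sum]
    refine sum_congr rfl fun i hi ↦ ?_
    simp [costWeight, (mem_filter.1 hi).2.1]
  rw [← sum_sdiff (unitSingletons_subset N c I), add_comm, hS]

variable {ι α : Type*} [DecidableEq α] {N : ι → Finset α} {c : ι → ℕ} {I : Finset ι} {k : ℕ}

lemma card_biUnion_residualSet_add_card_unitSingletons_le [DecidableEq ι] {b : ℕ}
    (h : HallWithin N c I b) (hb : 2 ≤ b) :
    #((I \ unitSingletons N c I).biUnion (residualSet N c I)) + #(unitSingletons N c I) ≤
      #(I.biUnion N) := by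
  set S := unitSingletons N c I
  have hsub : S.biUnion N ⊆ I.biUnion N :=
    biUnion_subset_biUnion_of_subset_left N (unitSingletons_subset N c I)
  calc #((I \ S).biUnion (residualSet N c I)) + #S
      = #((I \ S).biUnion N \ S.biUnion N) + #(S.biUnion N) := by
        rw [← biUnion_sdiff_right, h.card_biUnion_unitSingletons hb subset_rfl]
        rfl
    _ ≤ #(I.biUnion N \ S.biUnion N) + #(S.biUnion N) := by
        gcongr
        exact sdiff_subset
    _ = #(I.biUnion N) := card_sdiff_add_card_eq_card hsub

lemma sum_costWeight_le_of_hallWithin_one (hk : 2 ≤ k) (hdeg : ∀ v, #{i ∈ I | v ∈ N i} ≤ k)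
    (hc : ∀ i ∈ I, 1 ≤ c i) (h : HallWithin N c I 1) :
    ∑ i ∈ I, costWeight k (c i) ≤ k * #(I.biUnion N) :=
  calc ∑ i ∈ I, costWeight k (c i) ≤ ∑ i ∈ I, (#(N i) : ℝ) := by
        refine sum_le_sum fun i hi ↦ costWeight_le_of_two_le ?_ ?_ ?_
        · exact_mod_cast hk
        · exact_mod_cast hc i hi
        · exact_mod_cast h.two_le_cost_add_card le_rfl hi (hc i hi)
    _ ≤ k * #(I.biUnion N) := by exact_mod_cast sum_card_le_mul_card_biUnion hdeg

lemma sum_costWeight_le_of_hallWithin_two (hk : 2 ≤ k) (hdeg : ∀ v, #{i ∈ I | v ∈ N i} ≤ k)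
    (hc : ∀ i ∈ I, 1 ≤ c i) (h : HallWithin N c I 2) :
    ∑ i ∈ I, costWeight ((k + 1) / 2) (c i) ≤ (k + 1) / 2 * #(I.biUnion N) := by
  classical
  set S := unitSingletons N c I
  have hk' : (2 : ℝ) ≤ k := by exact_mod_cast hk
  have hrest : ∑ i ∈ I \ S, 2 * costWeight ((k + 1) / 2) (c i) ≤ ∑ i ∈ I \ S, (#(N i) : ℝ) := by
    refine sum_le_sum fun i hi ↦
      two_mul_costWeight_le_of_three_halves_le (by linarith) ?_ ?_
    · exact_mod_cast hc i (mem_sdiff.1 hi).1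
    · exact_mod_cast h.three_le_cost_add_card le_rfl hi (hc i (mem_sdiff.1 hi).1)
  have hsize : #S + ∑ i ∈ I \ S, (#(N i) : ℝ) ≤ k * #(I.biUnion N) := by
    exact_mod_cast (card_unitSingletons_add_sum_sdiff_card N c I).trans_le
      (sum_card_le_mul_card_biUnion hdeg)
  have hS : (#S : ℝ) ≤ #(I.biUnion N) := by
    exact_mod_cast (Nat.le_add_left _ _).trans
      (card_biUnion_residualSet_add_card_unitSingletons_le h le_rfl)
  rw [← mul_sum] at hrest
  rw [← card_unitSingletons_add_sum_sdiff_costWeight N c I]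
  linarith

lemma sum_costWeight_le_of_residualSystem [DecidableEq ι] {b : ℕ} {r : ℝ} (hk : 2 ≤ k)
    (hr : 1 ≤ r) (hb : 2 ≤ b) (hdeg : ∀ v, #{i ∈ I | v ∈ N i} ≤ k) (hc : ∀ i ∈ I, 1 ≤ c i)
    (h : HallWithin N c I b)
    (hres : ∑ i ∈ I \ unitSingletons N c I, costWeight r (residualCost N c i) ≤
      r * #((I \ unitSingletons N c I).biUnion (residualSet N c I))) :
    ∑ i ∈ I, costWeight (((k + 1) * r - k) / (2 * r - 1)) (c i) ≤
      ((k + 1) * r - k) / (2 * r - 1) * #(I.biUnion N) := by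
  set S := unitSingletons N c I
  set r' := ((k + 1) * r - k) / (2 * r - 1)
  have hpos : 0 < 2 * r - 1 := by linarith
  have hrest : (2 * r - 1) * ∑ i ∈ I \ S, costWeight r' (c i) ≤
      (r - 1) * ∑ i ∈ I \ S, (#(N i) : ℝ) + ∑ i ∈ I \ S, costWeight r (residualCost N c i) := by
    rw [mul_sum, mul_sum, ← sum_add_distrib]
    refine sum_le_sum fun i hi ↦ ?_
    have hiI := (mem_sdiff.1 hi).1
    rw [residualCost, Nat.cast_sub (h.two_le_cost_add_card (by lia) hiI (hc i hiI)), Nat.cast_add]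
    exact mul_costWeight_ratio_le (by exact_mod_cast hk) hr (by exact_mod_cast hc i hiI)
  have hsize : #S + ∑ i ∈ I \ S, (#(N i) : ℝ) ≤ k * #(I.biUnion N) := by
    exact_mod_cast (card_unitSingletons_add_sum_sdiff_card N c I).trans_le
      (sum_card_le_mul_card_biUnion hdeg)
  have hcover : (#((I \ S).biUnion (residualSet N c I)) + #S : ℝ) ≤ #(I.biUnion N) := by
    exact_mod_cast card_biUnion_residualSet_add_card_unitSingletons_le h hb
  rw [← card_unitSingletons_add_sum_sdiff_costWeight N c I, div_mul_eq_mul_div, le_div_iff₀' hpos]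
  calc (2 * r - 1) * (#S + ∑ i ∈ I \ S, costWeight r' (c i))
      ≤ (r - 1) * (#S + ∑ i ∈ I \ S, (#(N i) : ℝ)) +
          r * (#((I \ S).biUnion (residualSet N c I)) + #S) := by linarith
    _ ≤ (r - 1) * (k * #(I.biUnion N)) + r * #(I.biUnion N) := by
        gcongr
    _ = ((k + 1) * r - k) * #(I.biUnion N) := by ring

theorem sum_costWeight_le_hurkensSchrijverRatio_mul (hk : 2 ≤ k) (t : ℕ) {N : ι → Finset α}
    {c : ι → ℕ} {I : Finset ι} (hdeg : ∀ v, #{i ∈ I | v ∈ N i} ≤ k) (hc : ∀ i ∈ I, 1 ≤ c i)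
    (h : HallWithin N c I (t + 1)) :
    ∑ i ∈ I, costWeight (hurkensSchrijverRatio k t) (c i) ≤
      hurkensSchrijverRatio k t * #(I.biUnion N) := by
  classical
  induction t using Nat.twoStepInduction generalizing N c I with
  | zero => simpa only [hurkensSchrijverRatio] using
      sum_costWeight_le_of_hallWithin_one hk hdeg hc h
  | one => simpa only [hurkensSchrijverRatio] using
      sum_costWeight_le_of_hallWithin_two hk hdeg hc h
  | more t ih _ =>
    rw [hurkensSchrijverRatio]
    refine sum_costWeight_le_of_residualSystem hk (one_le_hurkensSchrijverRatio hk t) (by lia)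
      hdeg hc h (ih (fun v ↦ (card_le_card ?_).trans (hdeg v)) (fun i hi ↦ ?_)
        (h.residualSystem hc))
    · exact fun i hi ↦ mem_filter.2 ⟨(mem_sdiff.1 (mem_filter.1 hi).1).1,
        sdiff_subset (mem_filter.1 hi).2⟩
    · exact Nat.le_sub_of_add_le
        (h.three_le_cost_add_card (by lia) hi (hc i (mem_sdiff.1 hi).1))

theorem card_le_hurkensSchrijverRatio_mul (hk : 2 ≤ k) (t : ℕ)
    (hdeg : ∀ v, #{i ∈ I | v ∈ N i} ≤ k)
    (hhall : ∀ J ⊆ I, #J ≤ t + 1 → #J ≤ #(J.biUnion N)) :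
    (#I : ℝ) ≤ hurkensSchrijverRatio k t * #(I.biUnion N) := by
  have hunit : HallWithin N (fun _ ↦ 1) I (t + 1) := fun J hJ hcard ↦
    hhall J hJ (by rwa [card_eq_sum_ones])
  simpa [costWeight] using
    sum_costWeight_le_hurkensSchrijverRatio_mul hk t hdeg (fun _ _ ↦ le_rfl) hunit

end HurkensSchrijver

section DistanceMatching

variable {n : ℕ} {T : Type*} [DecidableEq T] {d l : ℕ} {E M X : Finset (Fin n × T)}

lemma DDM.mono (hX : DDM d E X) {Y : Finset (Fin n × T)} (hYX : Y ⊆ X) : DDM d E Y :=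
  ⟨hYX.trans hX.1, fun e he f hf ↦ hX.2.1 e (hYX he) f (hYX hf),
    fun e he f hf ↦ hX.2.2 e (hYX he) f (hYX hf)⟩

lemma mem_hitSet {e f : Fin n × T} : f ∈ hitSet d M e ↔
    f ≠ e ∧ f ∈ M ∧ (f.1 = e.1 ∨ f.2 = e.2 ∧ f.1 ≠ e.1 ∧ Nat.dist f.1.val e.1.val < d) := by
  rw [hitSet, mem_erase, mem_filter]

lemma DDM.hitSet_subset_sdiff (hX : DDM d E X) (M : Finset (Fin n × T)) {e : Fin n × T}
    (he : e ∈ X) : hitSet d M e ⊆ M \ X := by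
  intro f hf
  obtain ⟨hne, hfM, hconflict⟩ := mem_hitSet.1 hf
  refine mem_sdiff.2 ⟨hfM, fun hfX ↦ ?_⟩
  rcases hconflict with hnode | ⟨hnode, -, hdist⟩
  · exact hne (hX.2.1 f hfX e he hnode)
  · exact hdist.not_ge (hX.2.2 f hfX e he hnode hne)

lemma DDM.eq_of_mem_hitSet_of_cmp_eq (hX : DDM d E X) {e e' f : Fin n × T} (he : e ∈ X)
    (he' : e' ∈ X) (hef : f ∈ hitSet d M e) (he'f : f ∈ hitSet d M e')
    (hcmp : cmp e.1 f.1 = cmp e'.1 f.1) : e = e' := by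
  by_contra hne
  have hnode : e.1 ≠ e'.1 := fun h ↦ hne (hX.2.1 e he e' he' h)
  have hfar : e.2 = e'.2 → d ≤ Nat.dist e.1.val e'.1.val := fun h ↦ hX.2.2 e he e' he' h hne
  have hleft : e.1 < f.1 ↔ e'.1 < f.1 := by rw [← cmp_eq_lt_iff, hcmp, cmp_eq_lt_iff]
  have hright : f.1 < e.1 ↔ f.1 < e'.1 := by rw [← cmp_eq_gt_iff, hcmp, cmp_eq_gt_iff]
  have hconflict := (mem_hitSet.1 hef).2.2
  have hconflict' := (mem_hitSet.1 he'f).2.2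
  have hfe : f.1 ≠ e.1 := by lia
  have hfe' : f.1 ≠ e'.1 := by lia
  obtain ⟨hT, -, hnear⟩ := hconflict.resolve_left hfe
  obtain ⟨hT', -, hnear'⟩ := hconflict'.resolve_left hfe'
  have hdist := hfar (hT.symm.trans hT')
  unfold Nat.dist at hdist hnear hnear'
  lia

lemma DDM.card_filter_mem_hitSet_le_three (hX : DDM d E X) (M : Finset (Fin n × T))
    (f : Fin n × T) : #{e ∈ X | f ∈ hitSet d M e} ≤ 3 := by
  refine card_le_card_of_injOn (t := (univ : Finset Ordering)) (fun e ↦ cmp e.1 f.1)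
    (fun _ _ ↦ mem_coe.2 (mem_univ _)) fun e he e' he' hcmp ↦ ?_
  obtain ⟨heX, hef⟩ := mem_filter.1 he
  obtain ⟨he'X, he'f⟩ := mem_filter.1 he'
  exact hX.eq_of_mem_hitSet_of_cmp_eq heX he'X hef he'f hcmp

lemma LocOpt.card_le_card_biUnion_hitSet (hloc : LocOpt d l E M) (hX : DDM d E X)
    (hXM : Disjoint X M) (hcard : #X ≤ l) : #X ≤ #(X.biUnion (hitSet d M)) := by
  by_contra! hlt
  exact hloc ⟨X, hX, subset_sdiff.2 ⟨hX.1, hXM⟩, hcard, hlt⟩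

lemma LocOpt.card_sdiff_le (hloc : LocOpt d (l + 1) E M) (hX : DDM d E X) :
    (#(X \ M) : ℝ) ≤ rho (l + 1) * #(M \ X) := by
  have hXM : DDM d E (X \ M) := hX.mono sdiff_subset
  have hcover : (X \ M).biUnion (hitSet d M) ⊆ M \ X :=
    biUnion_subset.2 fun e he ↦ hX.hitSet_subset_sdiff M (mem_sdiff.1 he).1
  have hratio : 0 ≤ rho (l + 1) := zero_le_one.trans (one_le_rho_succ l)
  calc (#(X \ M) : ℝ) ≤ rho (l + 1) * #((X \ M).biUnion (hitSet d M)) := by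
        rw [rho_succ_eq_hurkensSchrijverRatio]
        exact card_le_hurkensSchrijverRatio_mul (by simp) l
          (hXM.card_filter_mem_hitSet_le_three M) fun J hJ hcard ↦
            hloc.card_le_card_biUnion_hitSet (hXM.mono hJ)
              (disjoint_sdiff_self_left.mono_left hJ) hcard
    _ ≤ rho (l + 1) * #(M \ X) := by gcongr

end DistanceMatching

theorem stmt16_general {n : ℕ} {T : Type*} [DecidableEq T] (d l : ℕ) (hl : 1 ≤ l)
    (E M : Finset (Fin n × T)) (hloc : LocOpt d l E M) :
    ∀ Ms, DDM d E Ms → (Ms.card : ℝ) ≤ rho l * M.card := by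
  intro Ms hMs
  obtain ⟨t, rfl⟩ := Nat.exists_eq_add_of_le' hl
  calc (#Ms : ℝ) = #(M ∩ Ms) + #(Ms \ M) := by
        rw [inter_comm, ← Nat.cast_add, card_inter_add_card_sdiff]
    _ ≤ rho (t + 1) * #(M ∩ Ms) + rho (t + 1) * #(M \ Ms) :=
        add_le_add (le_mul_of_one_le_left (Nat.cast_nonneg _) (one_le_rho_succ t))
          (hloc.card_sdiff_le hMs)
    _ = rho (t + 1) * #M := by
        rw [← mul_add, ← Nat.cast_add, card_inter_add_card_sdiff]

/-- If `M` is an `l`-locally optimal `d`-distance matching, then `|M*| ≤ ρ_l·|M|` for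
every `d`-distance matching `M*`. -/
theorem stmt16 {n : ℕ} {T : Type*} [DecidableEq T]
    (d l : ℕ) (hd : 1 ≤ d) (hl : 1 ≤ l) (E M : Finset (Fin n × T))
    (hM : DDM d E M) (hloc : LocOpt d l E M) :
    ∀ Ms, DDM d E Ms → (Ms.card : ℝ) ≤ rho l * M.card :=
  stmt16_general d l hl E M hloc
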